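/- arXiv:2508.02248 — 3 statements merged into one kernel-verified Lean document; each statement's English description precedes it below -/
import Mathlib

section
/- Let P₂ = {{1,2}, {2,3}, {3,4}, {5,6}} and P₃ = {{1,2,3}, {1,5,6}, {2,3,4}, {4,5,6}} be families of subsets of {1, …, 6}. Consider functions K assigning an integer K({i,j}) to each unordered pair of distinct elements of {1, …, 6} and satisfying: (i) K(e) = 2 for every pair e ∈ P₂; (ii) K(e) < 2 for every pair e ∉ P₂; (iii) for every triple T ∈ P₃, the sum of K over the three pairs contained in T equals 4; (iv) for every triple T ⊆ {1, …, 6} with T ∉ P₃, the sum of K over the three pairs contained in T is strictly less than 4; (v) for every i ∈ {1, …, 6}, Σ_{j ≠ i} K({i,j}) = 4. Then there is exactly one such K, namely: K({1,2}) = K({2,3}) = K({3,4}) = K({5,6}) = 2, K({1,5}) = K({1,6}) = K({4,5}) = K({4,6}) = 1, and K(e) = 0 for all other pairs e. -/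
open Finset

/-- The desired two-particle pole channels `P₂ = {{1,2},{2,3},{3,4},{5,6}}`
(vertices `1,…,6` encoded as `0,…,5`). -/
def P₂ : Finset (Sym2 (Fin 6)) := {s(0, 1), s(1, 2), s(2, 3), s(4, 5)}

/-- The desired three-particle pole channels `P₃ = {{1,2,3},{1,5,6},{2,3,4},{4,5,6}}`. -/
def P₃ : Finset (Finset (Fin 6)) := {{0, 1, 2}, {0, 4, 5}, {1, 2, 3}, {3, 4, 5}}

/-- The bootstrap constraint system for the six-particle amplitude with desired simple
poles `s₁₂, s₂₃, s₃₄, s₅₆, s₁₂₃, s₁₅₆, s₂₃₄, s₄₅₆`: (i) `K(e) = 2` on `P₂`;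
(ii) `K(e) < 2` off `P₂`; (iii) the sum of `K` over the three pairs in a triple of
`P₃` equals 4; (iv) the corresponding sum is `< 4` for every other triple;
(v) the single-particle regularity `Σ_{j≠i} K({i,j}) = 4`. -/
def SatBootstrap (K : Sym2 (Fin 6) → ℤ) : Prop :=
  (∀ e ∈ P₂, K e = 2) ∧
  (∀ e : Sym2 (Fin 6), ¬ e.IsDiag → e ∉ P₂ → K e < 2) ∧
  (∀ T ∈ P₃, (∑ e ∈ T.sym2.filter (fun e => ¬ e.IsDiag), K e) = 4) ∧
  (∀ T : Finset (Fin 6), T.card = 3 → T ∉ P₃ →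
    (∑ e ∈ T.sym2.filter (fun e => ¬ e.IsDiag), K e) < 4) ∧
  (∀ i : Fin 6, ∑ j ∈ Finset.univ.filter (fun j => j ≠ i), K s(i, j) = 4)

/-- The unique solution of the bootstrap system:
`K({1,2}) = K({2,3}) = K({3,4}) = K({5,6}) = 2`,
`K({1,5}) = K({1,6}) = K({4,5}) = K({4,6}) = 1`, and `K = 0` on all other pairs. -/
def K₀ : Sym2 (Fin 6) → ℤ :=
  Sym2.lift ⟨fun i j =>
    (![![0, 2, 0, 0, 1, 1],
       ![2, 0, 2, 0, 0, 0],
       ![0, 2, 0, 2, 0, 0],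
       ![0, 0, 2, 0, 1, 1],
       ![1, 0, 0, 1, 0, 2],
       ![1, 0, 0, 1, 2, 0]] : Fin 6 → Fin 6 → ℤ) i j, by decide⟩

/-! The triples `{0, 1, 2}` and `{1, 2, 3}` each have two sides of degree `2`, so the third side has
degree `0`. In `{0, 4, 5}` and `{3, 4, 5}` the side `{4, 5}` has degree `2`, so the other two sides
add up to `2`; each is at most `1` by integrality, hence equal to `1`. Regularity at `0` then gives
`K {0, 3} = 0`. Finally, every pair joining `1` or `2` to `4` or `5` closes an unwanted triple with
sides of degree `2` and `1`, so its degree is at most `0`, while regularity at `1` and at `2` makes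
the two such pairs at each of these vertices add up to `0`. -/

theorem sum_sym2_filter_not_isDiag_triple {α M : Type*} [DecidableEq α] [AddCommMonoid M]
    (f : Sym2 α → M) {a b c : α} (hcard : #{a, b, c} = 3) :
    ∑ e ∈ ({a, b, c} : Finset α).sym2 with ¬ e.IsDiag, f e =
      f s(a, b) + f s(a, c) + f s(b, c) := by
  obtain ⟨hab, hac, hbc⟩ := card_triple_eq_three_iff.mp hcard
  have hpairs : {e ∈ ({a, b, c} : Finset α).sym2 | ¬ e.IsDiag} = {s(a, b), s(a, c), s(b, c)} := by
    ext ⟨x, y⟩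
    simp only [mem_filter, mk_mem_sym2_iff, mem_insert, mem_singleton, Sym2.mk_isDiag_iff,
      Sym2.eq_iff]
    grind
  rw [hpairs, sum_insert (by grind), sum_pair (by grind), add_assoc]

/-- The pairs joining `0` or `3` to `4` or `5`: the pairs outside `P₂` contained in a triple of
`P₃` through `{4, 5}`. The solution has degree `1` on them. -/
def unitPairs : Finset (Sym2 (Fin 6)) := {s(0, 4), s(0, 5), s(3, 4), s(3, 5)}

/-- The pairs of distinct vertices outside `P₂` and `unitPairs`. The solution vanishes on them. -/
def zeroPairs : Finset (Sym2 (Fin 6)) :=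
  {s(0, 2), s(1, 3), s(0, 3), s(1, 4), s(1, 5), s(2, 4), s(2, 5)}

theorem K₀_cases_of_not_isDiag : ∀ e : Sym2 (Fin 6), ¬ e.IsDiag →
    e ∈ P₂ ∧ K₀ e = 2 ∨ e ∈ unitPairs ∧ K₀ e = 1 ∨ e ∈ zeroPairs ∧ K₀ e = 0 := by
  decide

theorem satBootstrap_K₀ : SatBootstrap K₀ :=
  ⟨by decide, by decide, by decide, by decide +kernel, by decide⟩

theorem card_eq_three_of_mem_P₃ : ∀ T ∈ P₃, #T = 3 := by decide

namespace SatBootstrap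

variable {K : Sym2 (Fin 6) → ℤ} {a b c : Fin 6}

theorem eq_two_of_mem_P₂ (h : SatBootstrap K) {e : Sym2 (Fin 6)} (he : e ∈ P₂) : K e = 2 :=
  h.1 e he

theorem le_one_of_notMem_P₂ (h : SatBootstrap K) {e : Sym2 (Fin 6)} (hdiag : ¬ e.IsDiag)
    (he : e ∉ P₂) : K e ≤ 1 :=
  Int.lt_add_one_iff.mp (h.2.1 e hdiag he)

theorem triple_eq_four (h : SatBootstrap K) (hT : {a, b, c} ∈ P₃) :
    K s(a, b) + K s(a, c) + K s(b, c) = 4 := by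
  rw [← sum_sym2_filter_not_isDiag_triple K (card_eq_three_of_mem_P₃ _ hT)]
  exact h.2.2.1 _ hT

theorem triple_le_three (h : SatBootstrap K) (hcard : #{a, b, c} = 3) (hT : {a, b, c} ∉ P₃) :
    K s(a, b) + K s(a, c) + K s(b, c) ≤ 3 := by
  rw [← sum_sym2_filter_not_isDiag_triple K hcard]
  exact Int.lt_add_one_iff.mp (h.2.2.2.1 _ hcard hT)

theorem sum_ne_eq_four (h : SatBootstrap K) (a : Fin 6) : ∑ b with b ≠ a, K s(a, b) = 4 :=
  h.2.2.2.2 a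

theorem eq_zero_of_mem_P₂_of_mem_P₂ (h : SatBootstrap K) (hT : {a, b, c} ∈ P₃)
    (hab : s(a, b) ∈ P₂) (hbc : s(b, c) ∈ P₂) : K s(a, c) = 0 := by
  linarith [h.triple_eq_four hT, h.eq_two_of_mem_P₂ hab, h.eq_two_of_mem_P₂ hbc]

theorem eq_one_of_mem_P₂ (h : SatBootstrap K) (hT : {a, b, c} ∈ P₃) (hbc : s(b, c) ∈ P₂)
    (hab : s(a, b) ∉ P₂) (hac : s(a, c) ∉ P₂) : K s(a, b) = 1 := by
  obtain ⟨hne_ab, hne_ac, -⟩ := card_triple_eq_three_iff.mp (card_eq_three_of_mem_P₃ _ hT)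
  have hab_le : K s(a, b) ≤ 1 := h.le_one_of_notMem_P₂ hne_ab hab
  have hac_le : K s(a, c) ≤ 1 := h.le_one_of_notMem_P₂ hne_ac hac
  linarith [h.triple_eq_four hT, h.eq_two_of_mem_P₂ hbc]

theorem nonpos_of_notMem_P₃ (h : SatBootstrap K) (hcard : #{a, b, c} = 3)
    (hT : {a, b, c} ∉ P₃) (hab : s(a, b) ∈ P₂) (hac : K s(a, c) = 1) : K s(b, c) ≤ 0 := by
  linarith [h.triple_le_three hcard hT, h.eq_two_of_mem_P₂ hab]

theorem eq_one_of_mem_unitPairs (h : SatBootstrap K) : ∀ e ∈ unitPairs, K e = 1 := by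
  simp only [unitPairs, mem_insert, mem_singleton, forall_eq_or_imp, forall_eq]
  exact ⟨h.eq_one_of_mem_P₂ (c := 5) (by decide) (by decide) (by decide) (by decide),
    h.eq_one_of_mem_P₂ (c := 4) (by decide) (by decide) (by decide) (by decide),
    h.eq_one_of_mem_P₂ (c := 5) (by decide) (by decide) (by decide) (by decide),
    h.eq_one_of_mem_P₂ (c := 4) (by decide) (by decide) (by decide) (by decide)⟩

theorem apply_zero_three (h : SatBootstrap K) : K s(0, 3) = 0 := by
  have hrow : K s(0, 1) + K s(0, 2) + K s(0, 3) + K s(0, 4) + K s(0, 5) = 4 := by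
    simpa [sum_filter, Fin.sum_univ_six] using h.sum_ne_eq_four 0
  have h01 : K s(0, 1) = 2 := h.eq_two_of_mem_P₂ (by decide)
  have h02 : K s(0, 2) = 0 :=
    h.eq_zero_of_mem_P₂_of_mem_P₂ (b := 1) (by decide) (by decide) (by decide)
  have h04 : K s(0, 4) = 1 := h.eq_one_of_mem_unitPairs _ (by decide)
  have h05 : K s(0, 5) = 1 := h.eq_one_of_mem_unitPairs _ (by decide)
  linarith

theorem apply_one_four_and_apply_one_five (h : SatBootstrap K) :
    K s(1, 4) = 0 ∧ K s(1, 5) = 0 := by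
  have hrow : K s(1, 0) + K s(1, 2) + K s(1, 3) + K s(1, 4) + K s(1, 5) = 4 := by
    simpa [sum_filter, Fin.sum_univ_six] using h.sum_ne_eq_four 1
  have h10 : K s(1, 0) = 2 := h.eq_two_of_mem_P₂ (by decide)
  have h12 : K s(1, 2) = 2 := h.eq_two_of_mem_P₂ (by decide)
  have h13 : K s(1, 3) = 0 :=
    h.eq_zero_of_mem_P₂_of_mem_P₂ (b := 2) (by decide) (by decide) (by decide)
  have h14 : K s(1, 4) ≤ 0 :=
    h.nonpos_of_notMem_P₃ (a := 0) (by decide) (by decide) (by decide)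
      (h.eq_one_of_mem_unitPairs _ (by decide))
  have h15 : K s(1, 5) ≤ 0 :=
    h.nonpos_of_notMem_P₃ (a := 0) (by decide) (by decide) (by decide)
      (h.eq_one_of_mem_unitPairs _ (by decide))
  constructor <;> linarith

theorem apply_two_four_and_apply_two_five (h : SatBootstrap K) :
    K s(2, 4) = 0 ∧ K s(2, 5) = 0 := by
  have hrow : K s(2, 0) + K s(2, 1) + K s(2, 3) + K s(2, 4) + K s(2, 5) = 4 := by
    simpa [sum_filter, Fin.sum_univ_six] using h.sum_ne_eq_four 2
  have h20 : K s(2, 0) = 0 :=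
    h.eq_zero_of_mem_P₂_of_mem_P₂ (b := 1) (by decide) (by decide) (by decide)
  have h21 : K s(2, 1) = 2 := h.eq_two_of_mem_P₂ (by decide)
  have h23 : K s(2, 3) = 2 := h.eq_two_of_mem_P₂ (by decide)
  have h24 : K s(2, 4) ≤ 0 :=
    h.nonpos_of_notMem_P₃ (a := 3) (by decide) (by decide) (by decide)
      (h.eq_one_of_mem_unitPairs _ (by decide))
  have h25 : K s(2, 5) ≤ 0 :=
    h.nonpos_of_notMem_P₃ (a := 3) (by decide) (by decide) (by decide)
      (h.eq_one_of_mem_unitPairs _ (by decide))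
  constructor <;> linarith

theorem eq_zero_of_mem_zeroPairs (h : SatBootstrap K) : ∀ e ∈ zeroPairs, K e = 0 := by
  simp only [zeroPairs, mem_insert, mem_singleton, forall_eq_or_imp, forall_eq]
  exact ⟨h.eq_zero_of_mem_P₂_of_mem_P₂ (b := 1) (by decide) (by decide) (by decide),
    h.eq_zero_of_mem_P₂_of_mem_P₂ (b := 2) (by decide) (by decide) (by decide),
    h.apply_zero_three, h.apply_one_four_and_apply_one_five.1,
    h.apply_one_four_and_apply_one_five.2, h.apply_two_four_and_apply_two_five.1,
    h.apply_two_four_and_apply_two_five.2⟩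

end SatBootstrap

/-- There is exactly one integer-valued assignment `K` on the unordered pairs of
distinct elements of `{1,…,6}` satisfying the bootstrap constraints (i)–(v),
namely `K₀`. -/
theorem bootstrap_unique_solution :
    SatBootstrap K₀ ∧
      ∀ K : Sym2 (Fin 6) → ℤ, SatBootstrap K →
        ∀ e : Sym2 (Fin 6), ¬ e.IsDiag → K e = K₀ e := by
  refine ⟨satBootstrap_K₀, fun K hK e he ↦ ?_⟩
  rcases K₀_cases_of_not_isDiag e he with ⟨hmem, hval⟩ | ⟨hmem, hval⟩ | ⟨hmem, hval⟩
  · rw [hval, hK.eq_two_of_mem_P₂ hmem]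
  · rw [hval, hK.eq_one_of_mem_unitPairs e hmem]
  · rw [hval, hK.eq_zero_of_mem_zeroPairs e hmem]
end

section
/- Let n ≥ 4, let z : {1, …, n} → ℂ be injective, and let s : {1, …, n} × {1, …, n} → ℂ satisfy s(a,b) = s(b,a), s(a,a) = 0, momentum conservation Σ_{b} s(a,b) = 0 for every a, and the scattering equations Σ_{b ≠ a} s(a,b)/(z_a − z_b) = 0 for every a. Let A ⊆ {1, …, n} with 2 ≤ |A| ≤ n − 2, let j ∈ A, let p ∉ A, and set s_A = Σ_{{a,b} ⊆ A, a ≠ b} s(a,b); assume s_A ≠ 0. Then the cross-ratio identity holds: −Σ_{i ∈ A, i ≠ j} Σ_{b ∉ A, b ≠ p} (s(i,b)/s_A) · ((z_b − z_p)(z_i − z_j)) / ((z_i − z_b)(z_j − z_p)) = 1. -/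
open Finset

/-! For distinct reference points `x`, `y`, the cross-ratios of `(u, v)` and `(v, u)` add up to `1`.
Weighting the symmetric invariants `s_{ib}` with the cross-ratio of `(z_i, z_b)` and summing over
`i, b ∈ A` therefore counts each pair once and gives `s_A`. On the other hand the sum over all `b`
at fixed `i` is a combination of the scattering equation at `i` and momentum conservation at `i`,
by partial fractions in `z_b`. It vanishes, so the sum over `i ∈ A`, `b ∉ A` is `-s_A`. -/

section Mandelstam

variable {ι R : Type*} [LinearOrder ι]

/-- The multiparticle Mandelstam invariant `s_A`, the sum of `s_{ab}` over the pairs in `A`. The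
order on the labels serves to count each pair once, also in characteristic two. -/
def mandelstam [AddCommMonoid R] (s : ι → ι → R) (A : Finset ι) : R :=
  ∑ q ∈ A ×ˢ A with q.1 < q.2, s q.1 q.2

theorem sum_sum_eq_sum_lt_add_swap [AddCommMonoid R] (A : Finset ι) {f : ι → ι → R}
    (hdiag : ∀ i ∈ A, f i i = 0) :
    ∑ i ∈ A, ∑ b ∈ A, f i b = ∑ q ∈ A ×ˢ A with q.1 < q.2, (f q.1 q.2 + f q.2 q.1) := by
  have hsplit : ∀ i ∈ A, ∀ b, f i b =
      (if i < b then f i b else 0) + (if b < i then f i b else 0) := by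
    intro i hi b
    rcases lt_trichotomy i b with h | rfl | h
    · simp [h, h.not_gt]
    · simp [hdiag i hi]
    · simp [h, h.not_gt]
  calc ∑ i ∈ A, ∑ b ∈ A, f i b
      = ∑ i ∈ A, ∑ b ∈ A, (if i < b then f i b else 0)
          + ∑ i ∈ A, ∑ b ∈ A, (if b < i then f i b else 0) := by
        simp only [← sum_add_distrib]
        exact sum_congr rfl fun i hi ↦ sum_congr rfl fun b _ ↦ hsplit i hi b
    _ = ∑ i ∈ A, ∑ b ∈ A, (if i < b then f i b else 0)
          + ∑ i ∈ A, ∑ b ∈ A, (if i < b then f b i else 0) := by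
        rw [sum_comm (f := fun i b ↦ if b < i then f i b else 0)]
    _ = ∑ q ∈ A ×ˢ A with q.1 < q.2, (f q.1 q.2 + f q.2 q.1) := by
        simp only [sum_add_distrib, sum_filter, sum_product]

theorem sum_sum_mul_eq_mandelstam [NonAssocSemiring R] {s w : ι → ι → R} (A : Finset ι)
    (hsymm : ∀ a b, s a b = s b a) (hdiag : ∀ a, s a a = 0)
    (hw : ∀ i b, i ≠ b → w i b + w b i = 1) :
    ∑ i ∈ A, ∑ b ∈ A, s i b * w i b = mandelstam s A := by
  rw [sum_sum_eq_sum_lt_add_swap A fun i _ ↦ by rw [hdiag, zero_mul]]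
  refine sum_congr rfl fun q hq ↦ ?_
  have hlt : q.1 < q.2 := (mem_filter.mp hq).2
  rw [hsymm q.2 q.1, ← mul_add, hw _ _ hlt.ne, mul_one]

end Mandelstam

section CrossRatio

variable {K : Type*} [Field K]

/-- The cross-ratio of `u`, `v` relative to the reference points `x`, `y`, normalised to be `0` at
`u = x` or `v = y` and `1` at `u = y` or `v = x`. -/
def crossRatio (u v x y : K) : K :=
  (v - y) * (u - x) / ((u - v) * (x - y))

theorem crossRatio_self_left (v x y : K) : crossRatio x v x y = 0 := by
  simp [crossRatio]

theorem crossRatio_self_right (u x y : K) : crossRatio u y x y = 0 := by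
  simp [crossRatio]

theorem crossRatio_add_swap {u v x y : K} (huv : u ≠ v) (hxy : x ≠ y) :
    crossRatio u v x y + crossRatio v u x y = 1 := by
  have hden : (u - v) * (x - y) ≠ 0 := mul_ne_zero (sub_ne_zero.mpr huv) (sub_ne_zero.mpr hxy)
  rw [crossRatio, crossRatio, ← neg_sub u v, neg_mul, div_neg, ← sub_eq_add_neg, ← sub_div,
    div_eq_one_iff_eq hden]
  ring

theorem crossRatio_eq_mul_sub_one {u v : K} (huv : u ≠ v) (x y : K) :
    crossRatio u v x y = (u - x) / (x - y) * ((u - y) / (u - v) - 1) := by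
  have huv' : u - v ≠ 0 := sub_ne_zero.mpr huv
  rw [div_sub_one huv', div_mul_div_comm, crossRatio]
  ring

theorem sum_erase_mul_crossRatio {ι : Type*} [DecidableEq ι] (z : ι → K) (t : ι → ι → K)
    (A B : Finset ι) (j p : ι) :
    ∑ i ∈ A.erase j, ∑ b ∈ B.erase p, t i b * crossRatio (z i) (z b) (z j) (z p) =
      ∑ i ∈ A, ∑ b ∈ B, t i b * crossRatio (z i) (z b) (z j) (z p) := by
  rw [sum_erase A (by simp [crossRatio_self_left])]
  exact sum_congr rfl fun i _ ↦ sum_erase B (by simp [crossRatio_self_right])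

end CrossRatio

section Scattering

variable {ι K : Type*} [Fintype ι] [LinearOrder ι] [Field K] {z : ι → K} {s : ι → ι → K}

/-- The left-hand side `E_a` of the scattering equation at the puncture `a`. -/
def scatteringFunction (z : ι → K) (s : ι → ι → K) (a : ι) : K :=
  ∑ b with b ≠ a, s a b / (z a - z b)

theorem sum_mul_crossRatio (hz : Function.Injective z) (hdiag : ∀ a, s a a = 0) (x y : K) (i : ι) :
    ∑ b, s i b * crossRatio (z i) (z b) x y =
      (z i - x) / (x - y) * ((z i - y) * scatteringFunction z s i - ∑ b, s i b) := by
  have hterm : ∀ b, s i b * crossRatio (z i) (z b) x y =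
      (z i - x) / (x - y) *
        ((z i - y) * (if b ≠ i then s i b / (z i - z b) else 0) - s i b) := by
    intro b
    by_cases hb : b = i
    · simp [hb, hdiag]
    · rw [if_pos hb, crossRatio_eq_mul_sub_one (hz.ne (Ne.symm hb))]
      ring
  simp only [hterm, ← mul_sum, sum_sub_distrib, scatteringFunction, sum_filter]

theorem sum_compl_mul_crossRatio (hz : Function.Injective z) (hsymm : ∀ a b, s a b = s b a)
    (hdiag : ∀ a, s a a = 0) (A : Finset ι) {x y : K} (hxy : x ≠ y) :
    ∑ i ∈ A, ∑ b ∈ Aᶜ, s i b * crossRatio (z i) (z b) x y =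
      ∑ i ∈ A, (z i - x) / (x - y) * ((z i - y) * scatteringFunction z s i - ∑ b, s i b)
        - mandelstam s A := by
  have hinside : ∑ i ∈ A, ∑ b ∈ A, s i b * crossRatio (z i) (z b) x y = mandelstam s A :=
    sum_sum_mul_eq_mandelstam A hsymm hdiag fun i b hib ↦ crossRatio_add_swap (hz.ne hib) hxy
  rw [eq_sub_iff_add_eq, ← hinside, ← sum_add_distrib]
  refine sum_congr rfl fun i _ ↦ ?_
  rw [sum_compl_add_sum, sum_mul_crossRatio hz hdiag]

theorem cross_ratio_identity_general (hz : Function.Injective z) (hsymm : ∀ a b, s a b = s b a)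
    (hdiag : ∀ a, s a a = 0) {A : Finset ι} {x y : K} (hxy : x ≠ y)
    (hmom : ∀ i ∈ A, z i ≠ x → ∑ b, s i b = 0)
    (hSE : ∀ i ∈ A, z i ≠ x → scatteringFunction z s i = 0) (hsA : mandelstam s A ≠ 0) :
    -(∑ i ∈ A, ∑ b ∈ Aᶜ, s i b / mandelstam s A * crossRatio (z i) (z b) x y) = 1 := by
  have honshell : ∀ i ∈ A,
      (z i - x) / (x - y) * ((z i - y) * scatteringFunction z s i - ∑ b, s i b) = 0 := by
    intro i hi
    by_cases hix : z i = x
    · simp [hix]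
    · simp [hmom i hi hix, hSE i hi hix]
  have hsum := sum_compl_mul_crossRatio hz hsymm hdiag A hxy
  rw [sum_eq_zero honshell, zero_sub] at hsum
  simp only [div_mul_eq_mul_div, ← sum_div]
  rw [hsum, neg_div, neg_neg, div_self hsA]

end Scattering

/-- The cross-ratio identity `I_n[A, j, p] = 1` on the support of the scattering
equations: for massless kinematics `s(a,b)` satisfying momentum conservation and the
scattering equations for the punctures `z`, any subset `A` with `2 ≤ |A| ≤ n - 2`,
`j ∈ A`, `p ∉ A`, and `s_A ≠ 0`, one has
`-Σ_{i ∈ A∖{j}} Σ_{b ∉ A, b ≠ p} (s_{ib}/s_A) · (z_{bp} z_{ij})/(z_{ib} z_{jp}) = 1`. -/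
theorem cross_ratio_identity (n : ℕ) (hn : 4 ≤ n)
    (z : Fin n → ℂ) (hz : Function.Injective z)
    (s : Fin n → Fin n → ℂ)
    (hsymm : ∀ a b, s a b = s b a)
    (hdiag : ∀ a, s a a = 0)
    (hmom : ∀ a, ∑ b, s a b = 0)
    (hSE : ∀ a, ∑ b ∈ Finset.univ.filter (fun b => b ≠ a), s a b / (z a - z b) = 0)
    (A : Finset (Fin n)) (hA1 : 2 ≤ A.card) (hA2 : A.card ≤ n - 2)
    (j : Fin n) (hj : j ∈ A) (p : Fin n) (hp : p ∉ A)
    (hsA : (∑ q ∈ (A ×ˢ A).filter (fun q => q.1 < q.2), s q.1 q.2) ≠ 0) :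
    -(∑ i ∈ A.erase j, ∑ b ∈ Aᶜ.erase p,
        (s i b / (∑ q ∈ (A ×ˢ A).filter (fun q => q.1 < q.2), s q.1 q.2)) *
          ((z b - z p) * (z i - z j)) / ((z i - z b) * (z j - z p))) = 1 := by
  have hjp : z j ≠ z p := hz.ne (ne_of_mem_of_not_mem hj hp)
  have h := cross_ratio_identity_general hz hsymm hdiag hjp (fun i _ _ ↦ hmom i)
    (fun i _ _ ↦ hSE i) hsA
  rw [← sum_erase_mul_crossRatio] at h
  simpa only [crossRatio, mandelstam, mul_div_assoc] using h
end

section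
/- Let V be a finite vertex set. For pairwise distinct vertices i, j, k, l ∈ V, let q(i,j,k,l) denote the quadrilateral weighted graph with weight +1 on the pairs {i,j} and {k,l}, weight −1 on the pairs {i,k} and {j,l}, and weight 0 on all other pairs (the 0-regular graph of the elementary four-point cross-ratio z_{ij} z_{kl} / (z_{ik} z_{jl})). Then every 0-regular weighted graph w on V (i.e. every integer weight function on unordered pairs of distinct vertices with Σ_{u≠v} w({v,u}) = 0 for all v ∈ V) is a finite integer linear combination of quadrilateral weighted graphs q(i,j,k,l). Equivalently, every 0-regular graph decomposes, at the level of net edge multiplicities, into a product of elementary four-point cross-ratios and their inverses. -/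
open Finset

/-- The net degree of a vertex `v` in the weighted graph `w`:
`deg_w(v) = Σ_{u ≠ v} w({v,u})`. -/
def netDeg {V : Type*} [Fintype V] [DecidableEq V] (w : Sym2 V → ℤ) (v : V) : ℤ :=
  ∑ u ∈ Finset.univ.filter (fun u => u ≠ v), w s(v, u)

/-- The quadrilateral weighted graph of the elementary four-point cross-ratio
`z_{ij} z_{kl} / (z_{ik} z_{jl})`: weight `+1` on `{i,j}` and `{k,l}`, weight `-1`
on `{i,k}` and `{j,l}`, and weight `0` elsewhere. -/
def quad {V : Type*} [DecidableEq V] (i j k l : V) : Sym2 V → ℤ := fun e =>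
  (if e = s(i, j) then 1 else 0) + (if e = s(k, l) then 1 else 0)
    - (if e = s(i, k) then 1 else 0) - (if e = s(j, l) then 1 else 0)

/-!
Fix a vertex `a` and a second vertex `b`. Subtracting `w({a,u})` copies of the quadrilateral
`quad a u b l`, with an auxiliary vertex `l`, moves the edge `{a,u}` onto `{a,b}`, so that after
doing this for every `u` only `{a,b}` can carry weight at `a`; regularity at `a` then forces this
weight to vanish, and `a` can be deleted. An auxiliary vertex exists as long as there are four
vertices, and on at most three vertices regularity makes twice every weight vanish.
-/

section ZeroRegularOn

variable {V R : Type*} [Ring R] {S : Finset V} {w : Sym2 V → R} {a b : V}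

variable (R) in
/-- The `R`-module of 0-regular weighted graphs all of whose edges have both ends in `S`. The net
degree may be summed over all of `S`, since loops have weight `0`. -/
def zeroRegularOn (S : Finset V) : Submodule R (Sym2 V → R) where
  carrier := {w | (∀ e : Sym2 V, e.IsDiag → w e = 0) ∧ (∀ e ∉ S.sym2, w e = 0) ∧
    ∀ v, ∑ u ∈ S, w s(v, u) = 0}
  zero_mem' := by simp
  add_mem' := by
    rintro w w' ⟨hdiag, hsupp, hreg⟩ ⟨hdiag', hsupp', hreg'⟩
    simp +contextual [sum_add_distrib, -mem_sym2_iff, *]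
  smul_mem' := by
    rintro r w ⟨hdiag, hsupp, hreg⟩
    simp +contextual [← mul_sum, -mem_sym2_iff, *]

lemma exists_mem_zeroRegularOn (hfin : w.support.Finite)
    (hdiag : ∀ e : Sym2 V, e.IsDiag → w e = 0) (hreg : ∀ v, ∑ᶠ u, w s(v, u) = 0) :
    ∃ S : Finset V, w ∈ zeroRegularOn R S := by
  classical
  let S := hfin.toFinset.biUnion Sym2.toFinset
  have mem_of_ne_zero {v u : V} (h : w s(v, u) ≠ 0) : v ∈ S ∧ u ∈ S := by
    constructor <;> exact mem_biUnion.2 ⟨s(v, u), by simpa using h, by simp⟩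
  refine ⟨S, hdiag, fun e he => ?_, fun v => ?_⟩
  · induction e with | _ v u
    exact not_not.1 fun h => he (mk_mem_sym2_iff.2 (mem_of_ne_zero h))
  · rw [← finsum_eq_sum_of_support_subset _ fun u hu => (mem_of_ne_zero hu).2, hreg]

lemma apply_eq_zero_of_mem_zeroRegularOn (hw : w ∈ zeroRegularOn R S)
    (h : ∀ u, u ≠ b → w s(a, u) = 0) (u : V) : w s(a, u) = 0 := by
  obtain ⟨-, hsupp, hreg⟩ := hw
  obtain rfl | hub := eq_or_ne u b
  · by_cases hu : u ∈ S
    · rw [← hreg a, sum_eq_single_of_mem u hu fun u' _ => h u']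
    · exact hsupp _ fun hmem => hu (mk_mem_sym2_iff.1 hmem).2
  · exact h u hub

lemma mem_zeroRegularOn_erase [DecidableEq V] (hw : w ∈ zeroRegularOn R S)
    (ha : ∀ u, w s(a, u) = 0) : w ∈ zeroRegularOn R (S.erase a) := by
  obtain ⟨hdiag, hsupp, hreg⟩ := hw
  refine ⟨hdiag, fun e he => ?_, fun v => ?_⟩
  · by_cases hae : a ∈ e
    · obtain ⟨u, rfl⟩ := hae
      exact ha u
    · refine hsupp e fun heS => he (mem_sym2_iff.2 fun v hv => mem_erase.2 ⟨?_, ?_⟩)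
      · exact ne_of_mem_of_not_mem hv hae
      · exact mem_sym2_iff.1 heS v hv
  · rw [sum_erase _ (Sym2.eq_swap ▸ ha v), hreg]

/- For `x ≠ y` in `S`, the at most one other vertex `t` has net degree `w({t,x}) + w({t,y}) = 0`,
so that the net degrees of `x` and `y` add up to `2 w({x,y})`. -/
lemma zeroRegularOn_eq_bot (h2 : IsLeftRegular (2 : R)) (hS : #S ≤ 3) :
    zeroRegularOn R S = ⊥ := by
  classical
  refine (Submodule.eq_bot_iff _).2 fun w ⟨hdiag, hsupp, hreg⟩ => funext fun e => ?_
  induction e with | _ x y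
  by_cases hxy : x = y
  · exact hdiag _ (Sym2.mk_isDiag_iff.2 hxy)
  by_cases hmem : s(x, y) ∈ S.sym2
  swap
  · exact hsupp _ hmem
  obtain ⟨hx, hy⟩ := mk_mem_sym2_iff.1 hmem
  have hyx : y ∈ S.erase x := mem_erase.2 ⟨Ne.symm hxy, hy⟩
  let T := (S.erase x).erase y
  have hT : #T ≤ 1 := by
    rw [card_erase_of_mem hyx, card_erase_of_mem hx]
    lia
  have degree_eq (v : V) : w s(v, x) + (w s(v, y) + ∑ t ∈ T, w s(v, t)) = 0 := by
    rw [add_sum_erase _ (w s(v, ·)) hyx, add_sum_erase _ (w s(v, ·)) hx, hreg]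
  have degree_x : w s(x, y) + ∑ t ∈ T, w s(x, t) = 0 := by
    simpa [hdiag] using degree_eq x
  have degree_y : w s(x, y) + ∑ t ∈ T, w s(y, t) = 0 := by
    simpa [hdiag, Sym2.eq_swap (a := y) (b := x)] using degree_eq y
  have degree_t : ∀ t ∈ T, w s(x, t) + w s(y, t) = 0 := fun t ht => by
    have no_edge_in_T : ∑ u ∈ T, w s(t, u) = 0 :=
      sum_eq_zero fun u hu => hdiag _ (Sym2.mk_isDiag_iff.2 (card_le_one.1 hT t ht u hu))
    simpa [no_edge_in_T, Sym2.eq_swap (a := t) (b := x), Sym2.eq_swap (a := t) (b := y)]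
      using degree_eq t
  refine h2.mul_left_eq_zero_iff.1 ?_
  calc 2 * w s(x, y)
      = (w s(x, y) + ∑ t ∈ T, w s(x, t)) + (w s(x, y) + ∑ t ∈ T, w s(y, t))
          - ∑ t ∈ T, (w s(x, t) + w s(y, t)) := by
        rw [sum_add_distrib, two_mul]
        abel
    _ = 0 := by rw [degree_x, degree_y, sum_eq_zero degree_t, add_zero, sub_zero]

end ZeroRegularOn

section Quad

variable {R V : Type*} [Ring R] [DecidableEq V] {w : Sym2 V → R} {S : Finset V} {a b i j k l y : V}

lemma sum_indicator_edge (hij : i ≠ j) (hi : i ∈ S) (hj : j ∈ S) (v : V) :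
    ∑ u ∈ S, (if s(v, u) = s(i, j) then (1 : ℤ) else 0)
      = (if v = i then 1 else 0) + (if v = j then 1 else 0) := by
  have split_edge (u : V) : (if s(v, u) = s(i, j) then (1 : ℤ) else 0)
      = (if u = j then (if v = i then 1 else 0) else 0)
        + (if u = i then (if v = j then 1 else 0) else 0) := by
    grind [Sym2.eq_iff]
  simp only [split_edge, sum_add_distrib, sum_ite_eq', hi, hj, if_true]

lemma sum_quad_eq_zero (hij : i ≠ j) (hik : i ≠ k) (hjl : j ≠ l) (hkl : k ≠ l)
    (hi : i ∈ S) (hj : j ∈ S) (hk : k ∈ S) (hl : l ∈ S) (v : V) :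
    ∑ u ∈ S, quad i j k l s(v, u) = 0 := by
  simp only [quad, sum_add_distrib, sum_sub_distrib, sum_indicator_edge, *, ne_eq,
    not_false_eq_true]
  ring

lemma quad_apply_of_isDiag (hij : i ≠ j) (hik : i ≠ k) (hjl : j ≠ l) (hkl : k ≠ l)
    {e : Sym2 V} (he : e.IsDiag) : quad i j k l e = 0 := by
  have ne_edge {x y : V} (hxy : x ≠ y) : e ≠ s(x, y) := by
    rintro rfl
    exact hxy (Sym2.mk_isDiag_iff.1 he)
  simp [quad, *]

lemma quad_apply_of_notMem_sym2 (hi : i ∈ S) (hj : j ∈ S) (hk : k ∈ S) (hl : l ∈ S)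
    {e : Sym2 V} (he : e ∉ S.sym2) : quad i j k l e = 0 := by
  have ne_edge {x y : V} (hx : x ∈ S) (hy : y ∈ S) : e ≠ s(x, y) := by
    rintro rfl
    exact he (mk_mem_sym2_iff.2 ⟨hx, hy⟩)
  simp [quad, *]

lemma quad_apply_left (hij : i ≠ j) (hik : i ≠ k) (hil : i ≠ l) (hyk : y ≠ k) :
    quad i j k l s(i, y) = if j = y then 1 else 0 := by
  simp only [quad, Sym2.eq_iff]
  grind

variable (R) in
/-- The quadrilateral graph `quad i j k l` with its integer weights read in the ring `R`. -/
def quadOver (i j k l : V) : Sym2 V → R := fun e => (quad i j k l e : R)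

variable (R V) in
/-- The `R`-linear combinations of quadrilateral graphs, i.e. the graphs which decompose into
four-point cross-ratios (with exponents in `R`). -/
def quadSpan : Submodule R (Sym2 V → R) :=
  Submodule.span R {g | ∃ i j k l : V,
    i ≠ j ∧ i ≠ k ∧ i ≠ l ∧ j ≠ k ∧ j ≠ l ∧ k ≠ l ∧ g = quadOver R i j k l}

lemma quadOver_mem_zeroRegularOn (hij : i ≠ j) (hik : i ≠ k) (hjl : j ≠ l) (hkl : k ≠ l)
    (hi : i ∈ S) (hj : j ∈ S) (hk : k ∈ S) (hl : l ∈ S) :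
    quadOver R i j k l ∈ zeroRegularOn R S := by
  refine ⟨fun e he => ?_, fun e he => ?_, fun v => ?_⟩
  · simp [quadOver, quad_apply_of_isDiag hij hik hjl hkl he]
  · simp [quadOver, quad_apply_of_notMem_sym2 hi hj hk hl he]
  · simp [quadOver, ← Int.cast_sum, sum_quad_eq_zero hij hik hjl hkl hi hj hk hl]

lemma exists_mem_quadSpan_apply_eq (hS : 3 < #S) (ha : a ∈ S) (hb : b ∈ S) (hab : a ≠ b)
    (hw : w ∈ zeroRegularOn R S) :
    ∃ c ∈ quadSpan R V ⊓ zeroRegularOn R S, ∀ y, y ≠ b → c s(a, y) = w s(a, y) := by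
  obtain ⟨hdiag, hsupp, -⟩ := hw
  have exists_auxiliary (u : V) : ∃ l ∈ S, l ∉ ({a, u, b} : Finset V) :=
    exists_mem_notMem_of_card_lt_card (card_le_three.trans_lt hS)
  choose l hlS hl using exists_auxiliary
  simp only [mem_insert, mem_singleton, not_or, ne_comm (a := l _)] at hl
  let T := (S.erase a).erase b
  have mem_T {u : V} : u ∈ T ↔ u ≠ b ∧ u ≠ a ∧ u ∈ S := by simp only [T, mem_erase]
  refine ⟨∑ u ∈ T, w s(a, u) • quadOver R a u b (l u), ?_, fun y hy => ?_⟩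
  · refine sum_mem fun u hu => Submodule.smul_mem _ _ ?_
    obtain ⟨hub, hua, huS⟩ := mem_T.1 hu
    obtain ⟨hal, hul, hbl⟩ := hl u
    exact ⟨Submodule.subset_span
        ⟨a, u, b, l u, hua.symm, hab, hal, hub, hul, hbl, rfl⟩,
      quadOver_mem_zeroRegularOn hua.symm hab hul hbl ha huS hb (hlS u)⟩
  · have quad_apply : ∀ u ∈ T, quad a u b (l u) s(a, y) = if u = y then 1 else 0 := fun u hu =>
      quad_apply_left (mem_T.1 hu).2.1.symm hab (hl u).1 hy
    have apply_of_notMem (hyT : y ∉ T) : w s(a, y) = 0 := by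
      obtain rfl | hya := eq_or_ne y a
      · exact hdiag _ (Sym2.mk_isDiag_iff.2 rfl)
      · exact hsupp _ fun hmem => hyT (mem_T.2 ⟨hy, hya, (mk_mem_sym2_iff.1 hmem).2⟩)
    calc (∑ u ∈ T, w s(a, u) • quadOver R a u b (l u)) s(a, y)
        = ∑ u ∈ T, w s(a, u) * (quad a u b (l u) s(a, y) : ℤ) := by simp [quadOver]
      _ = ∑ u ∈ T, if u = y then w s(a, u) else 0 :=
          sum_congr rfl fun u hu => by simp [quad_apply u hu]
      _ = w s(a, y) := by
          rw [sum_ite_eq', ite_eq_left_iff]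
          exact fun hyT => (apply_of_notMem hyT).symm

lemma exists_sub_mem_zeroRegularOn_erase (hS : 3 < #S) (ha : a ∈ S)
    (hw : w ∈ zeroRegularOn R S) :
    ∃ c ∈ quadSpan R V, w - c ∈ zeroRegularOn R (S.erase a) := by
  obtain ⟨b, hb, hba⟩ := exists_mem_ne (by lia : 1 < #S) a
  obtain ⟨c, ⟨hcspan, hcreg⟩, hc⟩ := exists_mem_quadSpan_apply_eq hS ha hb hba.symm hw
  have hsub : w - c ∈ zeroRegularOn R S := sub_mem hw hcreg
  exact ⟨c, hcspan, mem_zeroRegularOn_erase hsub <|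
    apply_eq_zero_of_mem_zeroRegularOn hsub fun y hy => sub_eq_zero.2 (hc y hy).symm⟩

theorem zeroRegularOn_le_quadSpan (h2 : IsLeftRegular (2 : R)) (S : Finset V) :
    zeroRegularOn R S ≤ quadSpan R V := by
  induction S using Finset.strongInduction with
  | H S ih =>
    obtain hS | hS := le_or_gt #S 3
    · exact zeroRegularOn_eq_bot h2 hS ▸ bot_le
    · intro w hw
      obtain ⟨a, ha⟩ : S.Nonempty := card_pos.1 (by lia)
      obtain ⟨c, hc, hwc⟩ := exists_sub_mem_zeroRegularOn_erase hS ha hw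
      exact sub_add_cancel w c ▸ add_mem (ih _ (erase_ssubset ha) hwc) hc

end Quad

theorem zeroRegular_decomposition_general {V R : Type*} [DecidableEq V] [Ring R]
    (h2 : IsLeftRegular (2 : R)) (w : Sym2 V → R) (hfin : w.support.Finite)
    (hdiag : ∀ e : Sym2 V, e.IsDiag → w e = 0) (hreg : ∀ v, ∑ᶠ u, w s(v, u) = 0) :
    w ∈ quadSpan R V :=
  have ⟨S, hw⟩ := exists_mem_zeroRegularOn hfin hdiag hreg
  zeroRegularOn_le_quadSpan h2 S hw

lemma finsum_eq_netDeg {V : Type*} [Fintype V] [DecidableEq V] {w : Sym2 V → ℤ}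
    (hdiag : ∀ e : Sym2 V, e.IsDiag → w e = 0) (v : V) :
    ∑ᶠ u, w s(v, u) = netDeg w v := by
  rw [finsum_eq_sum_of_fintype, netDeg, filter_ne',
    sum_erase (f := (w s(v, ·))) _ (hdiag _ (Sym2.mk_isDiag_iff.2 rfl))]

lemma quadOver_int {V : Type*} [DecidableEq V] (i j k l : V) :
    quadOver ℤ i j k l = quad i j k l :=
  rfl

/-- Every 0-regular weighted graph on a finite vertex set (an integer weight function
on unordered pairs of distinct vertices whose net degree vanishes at every vertex) is
a finite integer linear combination of quadrilateral weighted graphs `quad i j k l`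
with `i, j, k, l` pairwise distinct: every 0-regular graph decomposes, at the level
of net edge multiplicities, into a product of elementary four-point cross-ratios and
their inverses. -/
theorem zeroRegular_decomposition {V : Type*} [Fintype V] [DecidableEq V]
    (w : Sym2 V → ℤ)
    (hdiag : ∀ e : Sym2 V, e.IsDiag → w e = 0)
    (hreg : ∀ v : V, netDeg w v = 0) :
    w ∈ Submodule.span ℤ {g : Sym2 V → ℤ | ∃ i j k l : V,
      i ≠ j ∧ i ≠ k ∧ i ≠ l ∧ j ≠ k ∧ j ≠ l ∧ k ≠ l ∧ g = quad i j k l} := by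
  simpa only [quadSpan, quadOver_int] using zeroRegular_decomposition_general
    (IsLeftCancelMulZero.mul_left_cancel_of_ne_zero two_ne_zero) w w.support.toFinite hdiag
    fun v => (finsum_eq_netDeg hdiag v).trans (hreg v)
end
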